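/- arXiv:2601.21486 — 2 statements merged into one kernel-verified Lean document; each statement's English description precedes it below -/
import Mathlib

section
/- Let J_1 be a Jordan curve in ℝ², and let J_2, …, J_m be pairwise disjoint Jordan curves (also disjoint from J_1) contained in int J_1. Then the set int J_1 \ ⋃_{i=2}^m closure(int J_i) is path-connected. -/
open Set

/-- A Jordan curve in the plane: the image of an injective continuous map from the
circle `S¹` into `ℝ²`. -/
def IsJordanCurve (J : Set (EuclideanSpace ℝ (Fin 2))) : Prop :=
  ∃ f : Metric.sphere (0 : EuclideanSpace ℝ (Fin 2)) 1 → EuclideanSpace ℝ (Fin 2),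
    Continuous f ∧ Function.Injective f ∧ Set.range f = J

/-- The interior of a Jordan curve: the union of the bounded connected components of the
complement of `J`. -/
def jordanInterior (J : Set (EuclideanSpace ℝ (Fin 2))) : Set (EuclideanSpace ℝ (Fin 2)) :=
  {x | x ∉ J ∧ Bornology.IsBounded (connectedComponentIn Jᶜ x)}

/-!
Separation properties of a compact set `K ⊆ ℂ` are read off from continuous logarithms: points
`p, q ∉ K` lie in the same component of `Kᶜ` if and only if `(z - q) / (z - p)` has a continuous
logarithm on `K` (Borsuk). Logarithms on `K` and on `L` glue when `K ∩ L` is connected or empty, so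
two points separated neither by `K` nor by `L` are not separated by `K ∪ L` (Janiszewski). If `U` is
a bounded domain containing pairwise disjoint curves `K i`, two points of `U` outside all the curves
are separated neither by `frontier U` nor by any single `K i`, hence not by their disjoint union;
and the component joining them stays in `U` and outside all the curves.

For a Jordan curve, comparing winding numbers about two inside points shows with the same criterion
that the inside is connected. It is nonempty since the curve is the union of two arcs meeting only
in their endpoints, and its closure contains the whole curve since a curve with a point removed
carries a logarithm of `z - p` for every `p` off the curve.
-/

/-- `f` has a continuous branch of the logarithm on `s`. In particular `f` does not vanish on `s`,
and no continuity of `f` off `s` is required. -/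
def HasLogOn {X : Type*} [TopologicalSpace X] (f : X → ℂ) (s : Set X) : Prop :=
  ∃ l : X → ℂ, ContinuousOn l s ∧ ∀ x ∈ s, Complex.exp (l x) = f x

section Logarithm

variable {X Y : Type*} [TopologicalSpace X] [TopologicalSpace Y]

theorem sub_eq_sub_of_exp_eq_exp {s : Set X} (hs : IsPreconnected s) {l₁ l₂ : X → ℂ}
    (h₁ : ContinuousOn l₁ s) (h₂ : ContinuousOn l₂ s)
    (h : ∀ x ∈ s, Complex.exp (l₁ x) = Complex.exp (l₂ x)) {x y : X} (hx : x ∈ s) (hy : y ∈ s) :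
    l₁ x - l₂ x = l₁ y - l₂ y := by
  refine Complex.isCoveringMap_exp.constOn_of_comp hs (h₁.sub h₂) (fun a ha b hb => ?_) hx hy
  simp only [Pi.sub_apply, Complex.exp_sub, h a ha, h b hb, div_self (Complex.exp_ne_zero _)]

theorem exists_continuous_exp_eq [SimplyConnectedSpace X] [LocallyPathConnectedSpace X]
    {f : X → ℂ} (hf : Continuous f) (hf₀ : ∀ x, f x ≠ 0) :
    ∃ l : X → ℂ, Continuous l ∧ ∀ x, Complex.exp (l x) = f x := by
  obtain ⟨x₀⟩ : Nonempty X := inferInstance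
  obtain ⟨l, ⟨-, hl⟩, -⟩ := Complex.isCoveringMapOn_exp.existsUnique_continuousMap_lifts
    ⟨f, hf⟩ (Complex.exp_log (hf₀ x₀)) hf₀
  exact ⟨l, l.continuous, congrFun hl⟩

namespace HasLogOn

variable {f g : X → ℂ} {s t : Set X}

theorem mono (hf : HasLogOn f t) (hst : s ⊆ t) : HasLogOn f s := by
  obtain ⟨l, hl, hlf⟩ := hf
  exact ⟨l, hl.mono hst, fun x hx => hlf x (hst hx)⟩

theorem congr (hf : HasLogOn f s) (hfg : EqOn g f s) : HasLogOn g s := by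
  obtain ⟨l, hl, hlf⟩ := hf
  exact ⟨l, hl, fun x hx => (hlf x hx).trans (hfg hx).symm⟩

theorem mul (hf : HasLogOn f s) (hg : HasLogOn g s) : HasLogOn (fun x => f x * g x) s := by
  obtain ⟨l, hl, hlf⟩ := hf
  obtain ⟨k, hk, hkg⟩ := hg
  exact ⟨fun x => l x + k x, hl.add hk, fun x hx => by rw [Complex.exp_add, hlf x hx, hkg x hx]⟩

theorem zpow (hf : HasLogOn f s) (n : ℤ) : HasLogOn (fun x => f x ^ n) s := by
  obtain ⟨l, hl, hlf⟩ := hf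
  exact ⟨fun x => n * l x, continuousOn_const.mul hl,
    fun x hx => by rw [Complex.exp_int_mul, hlf x hx]⟩

theorem of_homotopy {H : unitInterval × X → ℂ} (hH : Continuous H) (hH₀ : ∀ y, H y ≠ 0)
    (h : HasLogOn (fun x => H (0, x)) univ) : HasLogOn (fun x => H (1, x)) univ := by
  obtain ⟨l, hl, hlH⟩ := h
  let H' : C(unitInterval × X, {z : ℂ // z ≠ 0}) := ⟨fun y => ⟨H y, hH₀ y⟩, hH.subtype_mk hH₀⟩
  let l' : C(X, ℂ) := ⟨l, continuousOn_univ.1 hl⟩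
  have hl' (x : X) : H' (0, x) = ⟨_, Complex.exp_ne_zero (l' x)⟩ :=
    Subtype.ext (hlH x (mem_univ x)).symm
  have hlift := Complex.isCoveringMap_exp.liftHomotopy_lifts H' l' hl'
  set L := Complex.isCoveringMap_exp.liftHomotopy H' l' hl'
  exact ⟨fun x => L (1, x), by fun_prop, fun x _ => congrArg Subtype.val (congrFun hlift (1, x))⟩

theorem image {φ : Y → X} (hφ : Topology.IsEmbedding φ) {s : Set Y}
    (hf : HasLogOn (f ∘ φ) s) : HasLogOn f (φ '' s) := by
  obtain ⟨l, hl, hlf⟩ := hf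
  have hext (y : Y) : Function.extend φ l 0 (φ y) = l y := hφ.injective.extend_apply l 0 y
  refine ⟨Function.extend φ l 0, ?_, ?_⟩
  · rintro _ ⟨y, hy, rfl⟩
    rw [ContinuousWithinAt, ← hφ.map_nhdsWithin_eq, Filter.tendsto_map'_iff, hext]
    exact (hl y hy).tendsto.congr fun z => (hext z).symm
  · rintro _ ⟨y, hy, rfl⟩
    rw [hext, hlf y hy, Function.comp_apply]

theorem union_of_isPreconnected_inter (hf : HasLogOn f s) (hg : HasLogOn f t)
    (hst : IsPreconnected (s ∩ t))
    (hglue : ∀ l : X → ℂ, ContinuousOn l s → ContinuousOn l t → ContinuousOn l (s ∪ t)) :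
    HasLogOn f (s ∪ t) := by
  classical
  obtain ⟨l, hl, hlf⟩ := hf
  obtain ⟨k, hk, hkf⟩ := hg
  have hlk : ∀ x ∈ s ∩ t, Complex.exp (l x) = Complex.exp (k x) := fun x hx => by
    rw [hlf x hx.1, hkf x hx.2]
  obtain ⟨c, hc, hlkc⟩ : ∃ c, Complex.exp c = 1 ∧ ∀ x ∈ s ∩ t, l x = k x + c := by
    rcases (s ∩ t).eq_empty_or_nonempty with h | ⟨x₀, hx₀⟩
    · exact ⟨0, Complex.exp_zero, by simp [h]⟩
    · refine ⟨l x₀ - k x₀, ?_, fun x hx => ?_⟩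
      · rw [Complex.exp_sub, hlk x₀ hx₀, div_self (Complex.exp_ne_zero _)]
      · rw [← sub_eq_sub_of_exp_eq_exp hst (hl.mono inter_subset_left)
          (hk.mono inter_subset_right) hlk hx hx₀, add_sub_cancel]
  have hs : EqOn (s.piecewise l (fun x => k x + c)) l s := piecewise_eqOn _ _ _
  have ht : EqOn (s.piecewise l (fun x => k x + c)) (fun x => k x + c) t := fun x hx => by
    by_cases hxs : x ∈ s
    · rw [hs hxs, hlkc x ⟨hxs, hx⟩]
    · exact piecewise_eq_of_notMem _ _ _ hxs
  refine ⟨s.piecewise l (fun x => k x + c),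
    hglue _ (hl.congr hs) ((hk.add continuousOn_const).congr ht), ?_⟩
  rintro x (hx | hx)
  · rw [hs hx, hlf x hx]
  · rw [ht hx, Complex.exp_add, hc, mul_one, hkf x hx]

theorem exists_continuous_exp_eqOn [NormalSpace X] (hs : IsClosed s) (hf : HasLogOn f s) :
    ∃ l : X → ℂ, Continuous l ∧ EqOn (fun x => Complex.exp (l x)) f s := by
  obtain ⟨l, hl, hlf⟩ := hf
  obtain ⟨L, hL⟩ := ContinuousMap.exists_restrict_eq hs
    ⟨s.domRestrict l, continuousOn_iff_continuous_domRestrict.1 hl⟩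
  refine ⟨L, L.continuous, fun x hx => ?_⟩
  have hLx : L x = l x := DFunLike.congr_fun hL ⟨x, hx⟩
  simp only [hLx, hlf x hx]

/-- With a logarithm of `f * h` extended from `s` to `X`, the functions `exp (log (f * h)) / h`
on `U` and `f` off `U` match on the frontier of `U`. -/
theorem exists_continuous_ne_zero_eqOn_compl [NormalSpace X] {U : Set X} {h : X → ℂ}
    (hs : IsClosed s) (hU : frontier U ⊆ s)
    (hf : ContinuousOn f (closure Uᶜ)) (hf₀ : ∀ x ∈ Uᶜ, f x ≠ 0)
    (hh : ContinuousOn h (closure U)) (hh₀ : ∀ x ∈ closure U, h x ≠ 0)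
    (hfh : HasLogOn (fun x => f x * h x) s) :
    ∃ φ : X → ℂ, Continuous φ ∧ (∀ x, φ x ≠ 0) ∧ EqOn φ f Uᶜ := by
  classical
  obtain ⟨l, hl, hlf⟩ := hfh.exists_continuous_exp_eqOn hs
  refine ⟨U.piecewise (fun x => Complex.exp (l x) / h x) f, ?_, fun x => ?_,
    piecewise_eqOn_compl _ _ _⟩
  · refine continuous_piecewise (fun x hx => ?_) (by fun_prop (disch := assumption)) hf
    rw [show Complex.exp (l x) = f x * h x from hlf (hU hx),
      mul_div_cancel_right₀ _ (hh₀ x (frontier_subset_closure hx))]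
  · by_cases hx : x ∈ U
    · rw [piecewise_eq_of_mem _ _ _ hx]
      exact div_ne_zero (Complex.exp_ne_zero _) (hh₀ x (subset_closure hx))
    · rw [piecewise_eq_of_notMem _ _ _ hx]
      exact hf₀ x hx

end HasLogOn

end Logarithm

/-- The union of `s` and the bounded connected components of its complement. The points of `s`
belong to it because `connectedComponentIn sᶜ x = ∅` for `x ∈ s`. -/
def filledHull {X : Type*} [TopologicalSpace X] [Bornology X] (s : Set X) : Set X :=
  {x | Bornology.IsBounded (connectedComponentIn sᶜ x)}

section Hull

variable {X : Type*} [TopologicalSpace X]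

theorem frontier_connectedComponentIn_compl_subset [LocallyConnectedSpace X] {s : Set X}
    (hs : IsClosed s) (p : X) : frontier (connectedComponentIn sᶜ p) ⊆ s := by
  intro x hx
  rw [hs.isOpen_compl.connectedComponentIn.frontier_eq] at hx
  by_contra hxs
  obtain ⟨y, hyx, hyp⟩ := mem_closure_iff.1 hx.1 _ hs.isOpen_compl.connectedComponentIn
    (mem_connectedComponentIn hxs)
  refine hx.2 ?_
  rw [connectedComponentIn_eq hyp, ← connectedComponentIn_eq hyx]
  exact mem_connectedComponentIn hxs

theorem connectedComponentIn_compl_subset_of_frontier_subset {s U : Set X} {p : X}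
    (hU : IsOpen U) (hUs : frontier U ⊆ s) (hp : p ∈ U) : connectedComponentIn sᶜ p ⊆ U := by
  by_cases hps : p ∈ sᶜ
  · refine isPreconnected_connectedComponentIn.subset_of_closure_inter_subset hU
      ⟨p, mem_connectedComponentIn hps, hp⟩ fun x hx => by_contra fun hxU => ?_
    exact connectedComponentIn_subset _ _ hx.2 (hUs (hU.frontier_eq ▸ ⟨hx.1, hxU⟩))
  · simp only [connectedComponentIn_eq_empty hps, empty_subset]

variable [Bornology X] {s : Set X}

theorem mem_filledHull {x : X} :
    x ∈ filledHull s ↔ Bornology.IsBounded (connectedComponentIn sᶜ x) :=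
  Iff.rfl

theorem subset_filledHull : s ⊆ filledHull s := fun x hx => by
  rw [mem_filledHull, connectedComponentIn_eq_empty (not_not_intro hx)]
  exact Bornology.isBounded_empty

theorem mem_filledHull_congr {x y : X} (h : y ∈ connectedComponentIn sᶜ x) :
    y ∈ filledHull s ↔ x ∈ filledHull s := by
  rw [mem_filledHull, mem_filledHull, connectedComponentIn_eq h]

theorem isClosed_filledHull [LocallyConnectedSpace X] (hs : IsClosed s) :
    IsClosed (filledHull s) := by
  rw [← isOpen_compl_iff, isOpen_iff_forall_mem_open]
  exact fun x hx => ⟨_, fun y hy => (mem_filledHull_congr hy).not.2 hx,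
    hs.isOpen_compl.connectedComponentIn,
    mem_connectedComponentIn fun hxs => hx (subset_filledHull hxs)⟩

theorem isOpen_filledHull_diff [LocallyConnectedSpace X] (hs : IsClosed s) :
    IsOpen (filledHull s \ s) :=
  isOpen_iff_forall_mem_open.2 fun _ hx =>
    ⟨_, fun _ hy => ⟨(mem_filledHull_congr hy).2 hx.1, connectedComponentIn_subset _ _ hy⟩,
      hs.isOpen_compl.connectedComponentIn, mem_connectedComponentIn hx.2⟩

end Hull

section NormedSpace

variable {E : Type*} [NormedAddCommGroup E] [NormedSpace ℝ E] {s : Set E} {p q x : E} {r : ℝ}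

theorem isPreconnected_compl_ball (hE : 1 < Module.rank ℝ E) (x : E) (r : ℝ) :
    IsPreconnected (Metric.ball x r)ᶜ := by
  rcases le_or_gt r 0 with hr | hr
  · rw [Metric.ball_eq_empty.2 hr, compl_empty]
    exact isPreconnected_univ
  have hpolar : (Metric.ball x r)ᶜ =
      (fun v : ℝ × E => x + v.1 • v.2) '' (Ici r ×ˢ Metric.sphere 0 1) := by
    ext y
    simp only [mem_compl_iff, Metric.mem_ball, not_lt, dist_eq_norm]
    constructor
    · intro hy
      have hyx : ‖y - x‖ ≠ 0 := (hr.trans_le hy).ne'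
      exact ⟨(‖y - x‖, ‖y - x‖⁻¹ • (y - x)),
        ⟨hy, by rw [mem_sphere_zero_iff_norm, norm_smul, norm_inv, norm_norm, inv_mul_cancel₀ hyx]⟩,
        by simp only [smul_inv_smul₀ hyx, add_sub_cancel]⟩
    · rintro ⟨⟨t, v⟩, ⟨ht, hv⟩, rfl⟩
      rw [add_sub_cancel_left, norm_smul, mem_sphere_zero_iff_norm.1 hv, mul_one]
      exact ht.trans (le_abs_self t)
  rw [hpolar]
  exact (isPreconnected_Ici.prod (isPreconnected_sphere hE 0 1)).image _ (by fun_prop)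

theorem compl_ball_subset_connectedComponentIn (hE : 1 < Module.rank ℝ E)
    (hs : s ⊆ Metric.ball x r) (hp : p ∉ filledHull s) :
    (Metric.ball x r)ᶜ ⊆ connectedComponentIn sᶜ p := by
  obtain ⟨y, hyp, hy⟩ := not_subset.1 fun h => hp (Metric.isBounded_ball.subset h)
  rw [connectedComponentIn_eq hyp]
  exact (isPreconnected_compl_ball hE x r).subset_connectedComponentIn hy (compl_subset_compl.2 hs)

theorem mem_connectedComponentIn_of_notMem_filledHull (hE : 1 < Module.rank ℝ E)
    (hs : Bornology.IsBounded s) (hp : p ∉ filledHull s) (hq : q ∉ filledHull s) :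
    q ∈ connectedComponentIn sᶜ p := by
  obtain ⟨r, hr⟩ := hs.subset_ball 0
  obtain ⟨y, hyq, hy⟩ := not_subset.1 fun h =>
    hq ((Metric.isBounded_ball (x := (0 : E)) (r := r)).subset h)
  rw [connectedComponentIn_eq (compl_ball_subset_connectedComponentIn hE hr hp hy),
    ← connectedComponentIn_eq hyq]
  exact mem_connectedComponentIn fun hqs => hq (subset_filledHull hqs)

theorem filledHull_subset_ball (hE : 1 < Module.rank ℝ E) (hs : s ⊆ Metric.ball x r) :
    filledHull s ⊆ Metric.ball x r := by
  have : Nontrivial E := rank_pos_iff_nontrivial.1 (zero_lt_one.trans hE)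
  refine fun y hy => by_contra fun hyr => NormedSpace.unbounded_univ ℝ E ?_
  rw [← union_compl_self (Metric.ball x r)]
  exact Metric.isBounded_ball.union (hy.subset ((isPreconnected_compl_ball hE x r
    ).subset_connectedComponentIn hyr (compl_subset_compl.2 hs)))

theorem isBounded_filledHull (hE : 1 < Module.rank ℝ E) (hs : Bornology.IsBounded s) :
    Bornology.IsBounded (filledHull s) := by
  obtain ⟨r, hr⟩ := hs.subset_ball 0
  exact Metric.isBounded_ball.subset (filledHull_subset_ball hE hr)

/-- A point of `closure U` of maximal norm lies in none of the hulls. -/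
theorem nonempty_diff_iUnion_filledHull [ProperSpace E] (hE : 1 < Module.rank ℝ E)
    {ι : Type*} [Finite ι] {U : Set E} {K : ι → Set E} (hU : IsOpen U)
    (hUb : Bornology.IsBounded U) (hne : U.Nonempty) (hK : ∀ i, IsClosed (K i))
    (hKU : ∀ i, K i ⊆ U) : (U \ ⋃ i, filledHull (K i)).Nonempty := by
  have : Nontrivial E := rank_pos_iff_nontrivial.1 (zero_lt_one.trans hE)
  obtain ⟨x, hx, hmax⟩ := hUb.isCompact_closure.exists_isMaxOn hne.closure
    continuous_norm.continuousOn
  have hUx : U ⊆ Metric.ball 0 ‖x‖ := by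
    rw [← interior_closedBall']
    exact interior_maximal
      (fun y hy => mem_closedBall_zero_iff.2 (hmax (subset_closure hy))) hU
  have hxK : x ∉ ⋃ i, filledHull (K i) := by
    simp only [mem_iUnion, not_exists]
    exact fun i hi => (mem_ball_zero_iff.1
      (filledHull_subset_ball hE ((hKU i).trans hUx) hi)).false
  obtain ⟨y, hyK, hyU⟩ := mem_closure_iff.1 hx _
    (isClosed_iUnion_of_finite fun i => isClosed_filledHull (hK i)).isOpen_compl hxK
  exact ⟨y, hyU, hyK⟩

end NormedSpace

section Plane

theorem one_lt_rank_real_complex : 1 < Module.rank ℝ ℂ :=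
  Complex.rank_real_complex ▸ Nat.one_lt_ofNat

theorem eq_zero_of_hasLogOn_sphere {p : ℂ} {R : ℝ} (hR : 0 < R) {n : ℤ}
    (h : HasLogOn (fun z => (z - p) ^ n) (Metric.sphere p R)) : n = 0 := by
  obtain ⟨l, hl, hlp⟩ := h
  have hlift (t : ℝ) : Complex.exp (l (circleMap p R t)) =
      Complex.exp (n * (Real.log R + t * Complex.I)) := by
    simp only [hlp _ (circleMap_mem_sphere p hR.le t), circleMap_sub_center, circleMap_zero,
      Complex.exp_int_mul, Complex.exp_add, ← Complex.ofReal_exp, Real.exp_log hR]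
  have hperiod := sub_eq_sub_of_exp_eq_exp isPreconnected_univ
    (hl.comp (continuous_circleMap p R).continuousOn fun t _ => circleMap_mem_sphere p hR.le t)
    (by fun_prop) (fun t _ => hlift t) (mem_univ 0) (mem_univ (2 * Real.pi))
  have hcirc : circleMap p R 0 = circleMap p R (2 * Real.pi) := (periodic_circleMap p R).eq.symm
  simp only [Function.comp_apply, hcirc, sub_right_inj, mul_eq_mul_left_iff,
    add_right_inj] at hperiod
  simpa [Real.pi_ne_zero] using hperiod

theorem hasLogOn_compl_range_path {a b : ℂ} (γ : Path a b) :
    HasLogOn (fun z => (z - b) / (z - a)) (range γ)ᶜ := by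
  have hne (t : unitInterval) (z : ↥(range γ)ᶜ) : (z : ℂ) - γ t ≠ 0 :=
    fun h => z.2 ⟨t, (sub_eq_zero.1 h).symm⟩
  have hnea (z : ↥(range γ)ᶜ) : (z : ℂ) - a ≠ 0 := by simpa using hne 0 z
  have hhom := HasLogOn.of_homotopy
    (H := fun x : unitInterval × ↥(range γ)ᶜ => ((x.2 : ℂ) - γ x.1) / (x.2 - a))
    (Continuous.div (by fun_prop) (by fun_prop) fun x => hnea x.2)
    (fun x => div_ne_zero (hne x.1 x.2) (hnea x.2))
    ⟨0, continuousOn_const, fun z _ => by simp [div_self (hnea z)]⟩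
  simp only [γ.target] at hhom
  simpa only [image_univ, Subtype.range_coe] using
    HasLogOn.image (f := fun z => (z - b) / (z - a)) Topology.IsEmbedding.subtypeVal hhom

variable {K : Set ℂ} {p q : ℂ}

/-- Otherwise `(z - p) ^ n` would extend from the outside of the component of `p` to a nonvanishing
continuous function on `ℂ`, hence have a logarithm on a large circle. -/
theorem eq_zero_of_hasLogOn_zpow_mul (hK : IsClosed K) (hpK : p ∉ K) (hp : p ∈ filledHull K)
    {n : ℤ} {h : ℂ → ℂ} (hh : ContinuousOn h (closure (connectedComponentIn Kᶜ p)))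
    (hh₀ : ∀ z ∈ closure (connectedComponentIn Kᶜ p), h z ≠ 0)
    (hl : HasLogOn (fun z => (z - p) ^ n * h z) K) : n = 0 := by
  have hne : ∀ z ∈ (connectedComponentIn Kᶜ p)ᶜ, z - p ≠ 0 := by
    rintro z hz h
    rw [sub_eq_zero.1 h] at hz
    exact hz (mem_connectedComponentIn hpK)
  have hzpow : ContinuousOn (fun z => (z - p) ^ n) (closure (connectedComponentIn Kᶜ p)ᶜ) := by
    rw [hK.isOpen_compl.connectedComponentIn.isClosed_compl.closure_eq]
    exact ContinuousOn.zpow₀ (by fun_prop) n fun z hz => Or.inl (hne z hz)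
  obtain ⟨φ, hφ, hφ₀, hφp⟩ := hl.exists_continuous_ne_zero_eqOn_compl hK
    (frontier_connectedComponentIn_compl_subset hK p) hzpow
    (fun z hz => zpow_ne_zero n (hne z hz)) hh hh₀
  obtain ⟨l, hl, hlφ⟩ := exists_continuous_exp_eq hφ hφ₀
  obtain ⟨R, hR, hpR⟩ := (mem_filledHull.1 hp).subset_ball_lt 0 p
  refine eq_zero_of_hasLogOn_sphere hR ⟨l, hl.continuousOn, fun z hz => (hlφ z).trans (hφp ?_)⟩
  exact fun hzp => (Metric.mem_ball.1 (hpR hzp)).ne hz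

theorem notMem_filledHull_of_hasLogOn_sub (hK : IsClosed K) (hpK : p ∉ K)
    (hl : HasLogOn (fun z => z - p) K) : p ∉ filledHull K := fun hp =>
  one_ne_zero (eq_zero_of_hasLogOn_zpow_mul (n := 1) (h := fun _ => 1) hK hpK hp
    continuousOn_const (fun _ _ => one_ne_zero) (by simpa only [zpow_one, mul_one] using hl))

theorem eq_zero_of_hasLogOn_zpow_mul_zpow (hK : IsClosed K) (hpK : p ∉ K) (hqK : q ∉ K)
    (hp : p ∈ filledHull K) (hpq : q ∉ connectedComponentIn Kᶜ p) {n m : ℤ}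
    (hl : HasLogOn (fun z => (z - p) ^ n * (z - q) ^ m) K) : n = 0 := by
  have hne : ∀ z ∈ closure (connectedComponentIn Kᶜ p), z - q ≠ 0 := by
    rintro z hz h
    rw [sub_eq_zero.1 h, closure_eq_self_union_frontier] at hz
    exact hz.elim hpq fun hq => hqK (frontier_connectedComponentIn_compl_subset hK p hq)
  exact eq_zero_of_hasLogOn_zpow_mul hK hpK hp
    (ContinuousOn.zpow₀ (by fun_prop) m fun z hz => Or.inl (hne z hz))
    (fun z hz => zpow_ne_zero m (hne z hz)) hl

/-- Borsuk's separation criterion. -/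
theorem mem_connectedComponentIn_compl_iff_hasLogOn (hK : IsCompact K) (hpK : p ∉ K)
    (hqK : q ∉ K) :
    q ∈ connectedComponentIn Kᶜ p ↔ HasLogOn (fun z => (z - q) / (z - p)) K := by
  constructor
  · intro hq
    have hpath : IsPathConnected (connectedComponentIn Kᶜ p) :=
      hK.isClosed.isOpen_compl.connectedComponentIn.isConnected_iff_isPathConnected.1
        (isConnected_connectedComponentIn_iff.2 hpK)
    obtain ⟨γ, hγ⟩ := hpath.joinedIn p (mem_connectedComponentIn hpK) q hq
    refine (hasLogOn_compl_range_path γ).mono (subset_compl_comm.1 ?_)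
    rintro _ ⟨t, rfl⟩
    exact connectedComponentIn_subset _ _ (hγ t)
  · intro hl
    by_contra hpq
    by_cases hp : p ∈ filledHull K
    · exact neg_ne_zero.2 one_ne_zero (eq_zero_of_hasLogOn_zpow_mul_zpow (n := -1) (m := 1)
        hK.isClosed hpK hqK hp hpq (hl.congr fun z _ => by
          simp only [zpow_neg, zpow_one, div_eq_inv_mul]))
    by_cases hq : q ∈ filledHull K
    · have hqp : p ∉ connectedComponentIn Kᶜ q := fun h => hpq (by
        rw [← connectedComponentIn_eq h]; exact mem_connectedComponentIn hqK)
      exact one_ne_zero (eq_zero_of_hasLogOn_zpow_mul_zpow (n := 1) (m := -1)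
        hK.isClosed hqK hpK hq hqp (hl.congr fun z _ => by
          simp only [zpow_neg, zpow_one, div_eq_mul_inv]))
    exact hpq (mem_connectedComponentIn_of_notMem_filledHull one_lt_rank_real_complex
      hK.isBounded hp hq)

theorem not_hasLogOn_compl_pair (hpq : p ≠ q) :
    ¬ HasLogOn (fun z => (z - q) / (z - p)) {p, q}ᶜ := by
  intro hl
  have hr : 0 < dist p q / 2 := half_pos (dist_pos.2 hpq)
  have hp : p ∈ (Metric.closedBall q (dist p q / 2))ᶜ := by
    simpa only [mem_compl_iff, Metric.mem_closedBall, not_le] using half_lt_self (dist_pos.2 hpq)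
  have hps : p ∉ Metric.sphere q (dist p q / 2) := fun h => hp (Metric.sphere_subset_closedBall h)
  have hqs : q ∉ Metric.sphere q (dist p q / 2) := by
    simpa only [Metric.mem_sphere, dist_self] using hr.ne
  have hq : q ∈ connectedComponentIn (Metric.sphere q (dist p q / 2))ᶜ p := by
    refine (mem_connectedComponentIn_compl_iff_hasLogOn (isCompact_sphere _ _) hps hqs).2
      (hl.mono ?_)
    rintro z hz (rfl | rfl)
    exacts [hps hz, hqs hz]
  refine connectedComponentIn_compl_subset_of_frontier_subset
    Metric.isClosed_closedBall.isOpen_compl ?_ hp hq (Metric.mem_closedBall_self hr.le)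
  rw [frontier_compl]
  exact Metric.frontier_closedBall_subset_sphere

/-- Janiszewski's theorem. -/
theorem mem_connectedComponentIn_compl_union {L : Set ℂ} (hK : IsCompact K) (hL : IsCompact L)
    (hKL : IsPreconnected (K ∩ L)) (hqK : q ∈ connectedComponentIn Kᶜ p)
    (hqL : q ∈ connectedComponentIn Lᶜ p) : q ∈ connectedComponentIn (K ∪ L)ᶜ p := by
  have hpK : p ∉ K := connectedComponentIn_nonempty_iff.1 ⟨q, hqK⟩
  have hpL : p ∉ L := connectedComponentIn_nonempty_iff.1 ⟨q, hqL⟩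
  have hqK' : q ∉ K := connectedComponentIn_subset _ _ hqK
  have hqL' : q ∉ L := connectedComponentIn_subset _ _ hqL
  rw [mem_connectedComponentIn_compl_iff_hasLogOn hK hpK hqK'] at hqK
  rw [mem_connectedComponentIn_compl_iff_hasLogOn hL hpL hqL'] at hqL
  rw [mem_connectedComponentIn_compl_iff_hasLogOn (hK.union hL) (fun h => h.elim hpK hpL)
    (fun h => h.elim hqK' hqL')]
  exact hqK.union_of_isPreconnected_inter hqL hKL
    fun _ hl hk => hl.union_of_isClosed hk hK.isClosed hL.isClosed

theorem mem_connectedComponentIn_compl_biUnion {ι : Type*} {K : ι → Set ℂ}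
    (hK : ∀ i, IsCompact (K i)) (hdisj : Pairwise (Function.onFun Disjoint K))
    (hq : ∀ i, q ∈ connectedComponentIn (K i)ᶜ p) (s : Finset ι) :
    q ∈ connectedComponentIn (⋃ i ∈ s, K i)ᶜ p := by
  classical
  induction s using Finset.induction_on with
  | empty => simp [connectedComponentIn_univ]
  | insert i s hi ih =>
    rw [Finset.set_biUnion_insert]
    refine mem_connectedComponentIn_compl_union (hK i) (s.isCompact_biUnion fun j _ => hK j) ?_
      (hq i) ih
    have hKi : Disjoint (K i) (⋃ j ∈ s, K j) := disjoint_iUnion₂_right.2 fun j hj =>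
      hdisj fun hij => hi (hij ▸ hj)
    rw [hKi.inter_eq]
    exact isPreconnected_empty

section Family

variable {ι : Type*} [Finite ι] {U : Set ℂ} {K : ι → Set ℂ}

theorem isPreconnected_diff_iUnion_filledHull (hU : IsOpen U) (hUb : Bornology.IsBounded U)
    (hUc : IsPreconnected U) (hK : ∀ i, IsCompact (K i))
    (hdisj : Pairwise (Function.onFun Disjoint K)) (hKU : ∀ i, K i ⊆ U) :
    IsPreconnected (U \ ⋃ i, filledHull (K i)) := by
  cases nonempty_fintype ι
  refine isPreconnected_of_forall_pair fun p hp q hq => ?_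
  have hout {x : ℂ} (hx : x ∈ U \ ⋃ i, filledHull (K i)) (i : ι) : x ∉ filledHull (K i) :=
    fun hi => hx.2 (mem_iUnion_of_mem i hi)
  have hfr : Disjoint U (frontier U) := hU.frontier_eq ▸ disjoint_sdiff_self_right
  have hqfr : q ∈ connectedComponentIn (frontier U)ᶜ p :=
    hUc.subset_connectedComponentIn hp.1 hfr.subset_compl_right hq.1
  have hqK : q ∈ connectedComponentIn (⋃ i, K i)ᶜ p := by
    simpa only [Finset.mem_univ, iUnion_true] using mem_connectedComponentIn_compl_biUnion hK hdisj
      (fun i => mem_connectedComponentIn_of_notMem_filledHull one_lt_rank_real_complex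
        (hK i).isBounded (hout hp i) (hout hq i)) Finset.univ
  have hempty : IsPreconnected (frontier U ∩ ⋃ i, K i) := by
    rw [(hfr.mono_left (iUnion_subset hKU)).symm.inter_eq]
    exact isPreconnected_empty
  have hpq : q ∈ connectedComponentIn (frontier U ∪ ⋃ i, K i)ᶜ p :=
    mem_connectedComponentIn_compl_union
      (hUb.isCompact_closure.of_isClosed_subset isClosed_frontier frontier_subset_closure)
      (isCompact_iUnion hK) hempty hqfr hqK
  refine ⟨_, fun x hx => ⟨connectedComponentIn_compl_subset_of_frontier_subset hU
    subset_union_left hp.1 hx, ?_⟩, mem_connectedComponentIn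
      (connectedComponentIn_nonempty_iff.1 ⟨q, hpq⟩), hpq, isPreconnected_connectedComponentIn⟩
  simp only [mem_iUnion, not_exists]
  exact fun i => (mem_filledHull_congr (connectedComponentIn_mono p (compl_subset_compl.2
    ((subset_iUnion K i).trans subset_union_right)) hx)).not.2 (hout hp i)

theorem isPathConnected_diff_iUnion_filledHull (hU : IsOpen U) (hUb : Bornology.IsBounded U)
    (hUc : IsConnected U) (hK : ∀ i, IsCompact (K i))
    (hdisj : Pairwise (Function.onFun Disjoint K)) (hKU : ∀ i, K i ⊆ U) :
    IsPathConnected (U \ ⋃ i, filledHull (K i)) :=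
  (hU.sdiff (isClosed_iUnion_of_finite fun i =>
    isClosed_filledHull (hK i).isClosed)).isConnected_iff_isPathConnected.1
    ⟨nonempty_diff_iUnion_filledHull one_lt_rank_real_complex hU hUb hUc.nonempty
      (fun i => (hK i).isClosed) hKU,
      isPreconnected_diff_iUnion_filledHull hU hUb hUc.isPreconnected hK hdisj hKU⟩

end Family

end Plane

section Circle

theorem exists_eq_zpow_mul_exp {g : Circle → ℂ} (hg : Continuous g) (hg₀ : ∀ x, g x ≠ 0) :
    ∃ (n : ℤ) (l : Circle → ℂ), Continuous l ∧
      ∀ x : Circle, g x = (x : ℂ) ^ n * Complex.exp (l x) := by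
  obtain ⟨L, hL, hLg⟩ := exists_continuous_exp_eq (hg.comp Circle.exp.continuous)
    fun t => hg₀ (Circle.exp t)
  have hexp (t : ℝ) : Complex.exp (L (t + 2 * Real.pi)) = Complex.exp (L t) := by
    rw [hLg, hLg, Function.comp_apply, Circle.exp_add_two_pi, Function.comp_apply]
  obtain ⟨n, hn⟩ := Complex.exp_eq_exp_iff_exists_int.1 (hexp 0)
  have hshift (t : ℝ) : L (t + 2 * Real.pi) = L t + n * (2 * Real.pi * Complex.I) := by
    have := sub_eq_sub_of_exp_eq_exp (l₁ := fun t => L (t + 2 * Real.pi)) isPreconnected_univ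
      (by fun_prop) hL.continuousOn (fun t _ => hexp t) (mem_univ t) (mem_univ 0)
    linear_combination this + hn
  set M : ℝ → ℂ := fun t => L t - n * (t * Complex.I) with hM
  have hperiodic : Function.Periodic M (2 * Real.pi) := fun t => by
    simp only [hM, hshift, Complex.ofReal_add, Complex.ofReal_mul, Complex.ofReal_ofNat]
    ring
  have hfactor (t : ℝ) : M (Complex.arg (Circle.exp t)) = M t := by
    obtain ⟨m, hm⟩ := Circle.exp_eq_exp.1 (Circle.exp_arg (Circle.exp t))
    rw [hm]
    exact hperiodic.int_mul m t
  refine ⟨n, fun x => M (Complex.arg x), ?_, fun x => ?_⟩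
  · have hquot : Topology.IsQuotientMap Circle.exp :=
      Circle.isAddQuotientCoveringMap_exp.toIsQuotientMap
    rw [hquot.continuous_iff]
    exact (show Continuous M by fun_prop).congr fun t => (hfactor t).symm
  · have hexp_arg (t : ℝ) : g (Circle.exp t) =
        (Circle.exp t : ℂ) ^ n * Complex.exp (M (Complex.arg (Circle.exp t))) := by
      rw [hfactor, Circle.coe_exp, ← Complex.exp_int_mul, ← Complex.exp_add, add_sub_cancel, hLg,
        Function.comp_apply]
    simpa only [Circle.exp_arg] using hexp_arg (Complex.arg x)

theorem hasLogOn_circle_compl_singleton (x₀ : Circle) :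
    HasLogOn (fun x : Circle => (x : ℂ)) {x₀}ᶜ := by
  have hslit : ∀ x ∈ ({x₀}ᶜ : Set Circle), ((-(x / x₀) : Circle) : ℂ) ∈ Complex.slitPlane := by
    intro x hx
    refine Complex.mem_slitPlane_iff_arg.2 ⟨fun harg => hx ?_, Circle.coe_ne_zero _⟩
    have : -(x / x₀) = -1 := Circle.arg_eq_arg.1 (by simpa using harg)
    exact div_eq_one.1 (neg_injective this)
  refine ⟨fun x => Complex.log (-(x / x₀) : Circle) + Complex.log (-x₀), ?_, fun x _ => ?_⟩
  · refine ContinuousOn.add (ContinuousOn.clog ?_ hslit) continuousOn_const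
    fun_prop
  · rw [Complex.exp_add, Complex.exp_log (Circle.coe_ne_zero _),
      Complex.exp_log (neg_ne_zero.2 (Circle.coe_ne_zero _))]
    simp

theorem hasLogOn_compl_singleton_of_continuous {g : Circle → ℂ} (hg : Continuous g)
    (hg₀ : ∀ x, g x ≠ 0) (x₀ : Circle) : HasLogOn g {x₀}ᶜ := by
  obtain ⟨n, l, hl, hgl⟩ := exists_eq_zpow_mul_exp hg hg₀
  have hlexp : HasLogOn (fun x => Complex.exp (l x)) {x₀}ᶜ := ⟨l, hl.continuousOn, fun _ _ => rfl⟩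
  exact (((hasLogOn_circle_compl_singleton x₀).zpow n).mul hlexp).congr fun x _ => hgl x

end Circle

section JordanCurve

variable {f : Circle → ℂ} {p q : ℂ}

/-- If `n` and `k` are the winding numbers of `f` about `p` and `q`, then
`(z - p) ^ k * (z - q) ^ (-n)` has winding number zero along `f`, hence a logarithm on the curve. -/
theorem mem_connectedComponentIn_compl_range (hf : Continuous f) (hinj : Function.Injective f)
    (hp : p ∈ filledHull (range f) \ range f) (hq : q ∈ filledHull (range f) \ range f) :
    q ∈ connectedComponentIn (range f)ᶜ p := by
  have hclosed : IsClosed (range f) := (isCompact_range hf).isClosed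
  have hne {w : ℂ} (hw : w ∉ range f) (x : Circle) : f x - w ≠ 0 :=
    fun h => hw ⟨x, sub_eq_zero.1 h⟩
  have hemb : Topology.IsEmbedding f := (hf.isClosedEmbedding hinj).isEmbedding
  obtain ⟨n, l, hl, hfl⟩ := exists_eq_zpow_mul_exp (g := fun x => f x - p) (by fun_prop) (hne hp.2)
  obtain ⟨k, m, hm, hfm⟩ := exists_eq_zpow_mul_exp (g := fun x => f x - q) (by fun_prop) (hne hq.2)
  by_contra hpq
  have hlog : HasLogOn (fun z => (z - p) ^ k * (z - q) ^ (-n)) (range f) := by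
    rw [← image_univ]
    refine HasLogOn.image hemb ⟨fun x => k * l x - n * m x, by fun_prop, fun x _ => ?_⟩
    have hx := Circle.coe_ne_zero x
    simp only [Function.comp_apply, hfl, hfm, mul_zpow, ← zpow_mul, ← Complex.exp_int_mul,
      Complex.exp_sub, mul_comm k n, zpow_neg]
    field_simp
  have hk : k = 0 := eq_zero_of_hasLogOn_zpow_mul_zpow hclosed hp.2 hq.2 hp.1 hpq hlog
  refine notMem_filledHull_of_hasLogOn_sub hclosed hq.2 ?_ hq.1
  rw [← image_univ]
  exact HasLogOn.image hemb ⟨m, hm.continuousOn, fun x _ => by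
    rw [Function.comp_apply, hfm, hk, zpow_zero, one_mul]⟩

theorem not_isPreconnected_compl_range_union_range (hpq : p ≠ q) (γ₁ γ₂ : Path p q)
    (hγ : range γ₁ ∩ range γ₂ ⊆ {p, q}) : ¬ IsPreconnected (range γ₁ ∪ range γ₂)ᶜ := by
  intro hpre
  have hopen (γ : Path p q) : IsOpen (range γ)ᶜ :=
    (isCompact_range γ.continuous).isClosed.isOpen_compl
  rw [compl_union] at hpre
  refine not_hasLogOn_compl_pair hpq (((hasLogOn_compl_range_path γ₁).union_of_isPreconnected_inter
    (hasLogOn_compl_range_path γ₂) hpre fun _ hl hk =>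
      hl.union_of_isOpen hk (hopen γ₁) (hopen γ₂)).mono ?_)
  rwa [← compl_inter, compl_subset_compl]

theorem nonempty_filledHull_range_diff (hf : Continuous f) (hinj : Function.Injective f) :
    (filledHull (range f) \ range f).Nonempty := by
  by_contra hempty
  have hout : ∀ x ∈ (range f)ᶜ, x ∉ filledHull (range f) := fun x hx hxf => hempty ⟨x, hxf, hx⟩
  have hpre : IsPreconnected (range f)ᶜ := isPreconnected_of_forall_pair fun x hx y hy =>
    ⟨_, connectedComponentIn_subset _ x, mem_connectedComponentIn hx,
      mem_connectedComponentIn_of_notMem_filledHull one_lt_rank_real_complex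
        (isCompact_range hf).isBounded (hout x hx) (hout y hy), isPreconnected_connectedComponentIn⟩
  have hne : (1 : Circle) ≠ -1 := (Circle.neg_ne_self 1).symm
  refine not_isPreconnected_compl_range_union_range (hinj.ne hne) ((Circle.path 1 (-1)).map hf)
    ((Circle.path (-1) 1).symm.map hf) ?_ ?_
  · rw [Path.map_coe, Path.map_coe, range_comp, range_comp, Path.symm_range, ← image_inter hinj,
      Circle.range_path_inter_range_path hne, image_pair]
  · rwa [Path.map_coe, Path.map_coe, range_comp, range_comp, Path.symm_range, ← image_union,
      Circle.range_path_union_range_path hne, image_univ]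

theorem filledHull_range_diff_eq (hf : Continuous f) (hinj : Function.Injective f)
    (hp : p ∈ filledHull (range f) \ range f) :
    filledHull (range f) \ range f = connectedComponentIn (range f)ᶜ p :=
  Subset.antisymm (fun _ hq => mem_connectedComponentIn_compl_range hf hinj hp hq)
    fun _ hq => ⟨(mem_filledHull_congr hq).2 hp.1, connectedComponentIn_subset _ _ hq⟩

theorem isConnected_filledHull_range_diff (hf : Continuous f) (hinj : Function.Injective f) :
    IsConnected (filledHull (range f) \ range f) := by
  obtain ⟨p, hp⟩ := nonempty_filledHull_range_diff hf hinj
  rw [filledHull_range_diff_eq hf hinj hp]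
  exact isConnected_connectedComponentIn_iff.2 hp.2

/-- If the frontier of the inside missed a point of the curve, it would lie in an arc, which does
not separate the plane. -/
theorem range_subset_closure_filledHull_range_diff (hf : Continuous f)
    (hinj : Function.Injective f) : range f ⊆ closure (filledHull (range f) \ range f) := by
  have hclosed : IsClosed (range f) := (isCompact_range hf).isClosed
  obtain ⟨p, hp⟩ := nonempty_filledHull_range_diff hf hinj
  have hfr : frontier (filledHull (range f) \ range f) ⊆ range f := by
    rw [filledHull_range_diff_eq hf hinj hp]
    exact frontier_connectedComponentIn_compl_subset hclosed p
  rintro _ ⟨x₀, rfl⟩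
  by_contra hx₀
  set B := frontier (filledHull (range f) \ range f)
  have hlog : HasLogOn (fun z => z - p) B := by
    have hpre := (hasLogOn_compl_singleton_of_continuous (hf.sub continuous_const)
      (fun x hx => hp.2 ⟨x, sub_eq_zero.1 hx⟩) x₀).image (f := fun z => z - p)
      (hf.isClosedEmbedding hinj).isEmbedding
    refine hpre.mono fun z hz => ?_
    obtain ⟨x, rfl⟩ := hfr hz
    exact mem_image_of_mem f fun hx => hx₀ (hx ▸ frontier_subset_closure hz)
  refine notMem_filledHull_of_hasLogOn_sub isClosed_frontier (fun h => hp.2 (hfr h)) hlog ?_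
  refine mem_filledHull.2 ((isBounded_filledHull one_lt_rank_real_complex
    (isCompact_range hf).isBounded).subset ?_)
  exact (connectedComponentIn_compl_subset_of_frontier_subset (isOpen_filledHull_diff hclosed)
    Subset.rfl hp).trans sdiff_subset

theorem closure_filledHull_range_diff (hf : Continuous f) (hinj : Function.Injective f) :
    closure (filledHull (range f) \ range f) = filledHull (range f) := by
  refine Subset.antisymm (closure_minimal sdiff_subset
    (isClosed_filledHull (isCompact_range hf).isClosed)) fun z hz => ?_
  by_cases hzf : z ∈ range f
  · exact range_subset_closure_filledHull_range_diff hf hinj hzf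
  · exact subset_closure ⟨hz, hzf⟩

end JordanCurve

section Transport

theorem image_filledHull {X Y : Type*} [PseudoMetricSpace X] [PseudoMetricSpace Y] (e : X ≃ᵢ Y)
    (s : Set X) : e '' filledHull s = filledHull (e '' s) := by
  ext y
  obtain ⟨x, rfl⟩ := e.surjective y
  rw [e.injective.mem_set_image]
  by_cases hx : x ∈ s
  · exact iff_of_true (subset_filledHull hx) (subset_filledHull (mem_image_of_mem e hx))
  · rw [mem_filledHull, mem_filledHull, ← image_compl_eq e.bijective, ← e.coe_toHomeomorph,
      ← e.toHomeomorph.image_connectedComponentIn hx, e.coe_toHomeomorph]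
    exact ⟨e.isometry.lipschitz.isBounded_image, fun h => by
      simpa only [preimage_image_eq _ e.injective] using
        e.isometry.antilipschitz.isBounded_preimage h⟩

/-- The isometric identification of the Euclidean plane with `ℂ`, through which separation
theorems proved for `ℂ` are transported. -/
noncomputable def planeEquivComplex : EuclideanSpace ℝ (Fin 2) ≃ₗᵢ[ℝ] ℂ :=
  Complex.orthonormalBasisOneI.repr.symm

theorem jordanInterior_eq_filledHull_diff (J : Set (EuclideanSpace ℝ (Fin 2))) :
    jordanInterior J = filledHull J \ J :=
  inter_comm Jᶜ (filledHull J)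

theorem image_filledHull_planeEquivComplex (J : Set (EuclideanSpace ℝ (Fin 2))) :
    planeEquivComplex '' filledHull J = filledHull (planeEquivComplex '' J) :=
  image_filledHull planeEquivComplex.toIsometryEquiv J

theorem image_jordanInterior_planeEquivComplex (J : Set (EuclideanSpace ℝ (Fin 2))) :
    planeEquivComplex '' jordanInterior J =
      filledHull (planeEquivComplex '' J) \ planeEquivComplex '' J := by
  rw [jordanInterior_eq_filledHull_diff, image_sdiff planeEquivComplex.injective,
    image_filledHull_planeEquivComplex]

namespace IsJordanCurve

variable {J : Set (EuclideanSpace ℝ (Fin 2))}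

theorem exists_range_eq_image_planeEquivComplex (hJ : IsJordanCurve J) :
    ∃ f : Circle → ℂ, Continuous f ∧ Function.Injective f ∧
      range f = planeEquivComplex '' J := by
  obtain ⟨f, hf, hinj, rfl⟩ := hJ
  set e := planeEquivComplex
  have hmem (x : Circle) : e.symm x ∈ Metric.sphere (0 : EuclideanSpace ℝ (Fin 2)) 1 := by
    rw [mem_sphere_zero_iff_norm, e.symm.norm_map, Circle.norm_coe]
  have hmem' (y : Metric.sphere (0 : EuclideanSpace ℝ (Fin 2)) 1) : e y ∈ Metric.sphere 0 1 := by
    rw [mem_sphere_zero_iff_norm, e.norm_map, norm_eq_of_mem_sphere]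
  let φ : Circle → Metric.sphere (0 : EuclideanSpace ℝ (Fin 2)) 1 := fun x => ⟨e.symm x, hmem x⟩
  have hφ : Continuous φ := (e.symm.continuous.comp continuous_subtype_val).subtype_mk _
  have hφinj : Function.Injective φ := fun x y h =>
    Circle.ext (e.symm.injective (congrArg Subtype.val h))
  have hφsurj : Function.Surjective φ := fun y =>
    ⟨⟨e y, hmem' y⟩, Subtype.ext (e.symm_apply_apply _)⟩
  refine ⟨e ∘ f ∘ φ, e.continuous.comp (hf.comp hφ), e.injective.comp (hinj.comp hφinj), ?_⟩
  rw [range_comp, hφsurj.range_comp]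

theorem isCompact (hJ : IsJordanCurve J) : IsCompact J := by
  obtain ⟨f, hf, -, rfl⟩ := hJ
  exact isCompact_range hf

theorem isOpen_jordanInterior (hJ : IsJordanCurve J) : IsOpen (jordanInterior J) :=
  jordanInterior_eq_filledHull_diff J ▸ isOpen_filledHull_diff hJ.isCompact.isClosed

theorem isBounded_jordanInterior (hJ : IsJordanCurve J) :
    Bornology.IsBounded (jordanInterior J) := by
  have hrank : 1 < Module.rank ℝ (EuclideanSpace ℝ (Fin 2)) :=
    planeEquivComplex.toLinearEquiv.rank_eq ▸ one_lt_rank_real_complex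
  exact (isBounded_filledHull hrank hJ.isCompact.isBounded).subset
    (jordanInterior_eq_filledHull_diff J ▸ sdiff_subset)

theorem isConnected_jordanInterior (hJ : IsJordanCurve J) : IsConnected (jordanInterior J) := by
  obtain ⟨f, hf, hinj, hfJ⟩ := hJ.exists_range_eq_image_planeEquivComplex
  rw [← planeEquivComplex.toHomeomorph.isConnected_image]
  change IsConnected (planeEquivComplex '' _)
  rw [image_jordanInterior_planeEquivComplex, ← hfJ]
  exact isConnected_filledHull_range_diff hf hinj

theorem closure_jordanInterior (hJ : IsJordanCurve J) :
    closure (jordanInterior J) = filledHull J := by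
  obtain ⟨f, hf, hinj, hfJ⟩ := hJ.exists_range_eq_image_planeEquivComplex
  refine planeEquivComplex.injective.image_injective ?_
  calc planeEquivComplex '' closure (jordanInterior J)
    _ = closure (planeEquivComplex '' jordanInterior J) :=
      planeEquivComplex.toHomeomorph.image_closure _
    _ = planeEquivComplex '' filledHull J := by
      rw [image_jordanInterior_planeEquivComplex, image_filledHull_planeEquivComplex, ← hfJ,
        closure_filledHull_range_diff hf hinj]

end IsJordanCurve

theorem jordanInterior_diff_closures_pathConnected_general {ι : Type*} [Finite ι]
    {U : Set (EuclideanSpace ℝ (Fin 2))} {K : ι → Set (EuclideanSpace ℝ (Fin 2))}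
    (hU : IsOpen U) (hUb : Bornology.IsBounded U) (hUc : IsConnected U)
    (hK : ∀ i, IsJordanCurve (K i)) (hdisj : Pairwise (Function.onFun Disjoint K))
    (hKU : ∀ i, K i ⊆ U) :
    IsPathConnected (U \ ⋃ i, closure (jordanInterior (K i))) := by
  set e := planeEquivComplex
  have himage : e '' (U \ ⋃ i, closure (jordanInterior (K i))) =
      e '' U \ ⋃ i, filledHull (e '' K i) := by
    simp only [image_sdiff e.injective, image_iUnion, (hK _).closure_jordanInterior, e,
      image_filledHull_planeEquivComplex]
  rw [← e.toHomeomorph.isPathConnected_image]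
  change IsPathConnected (e '' _)
  rw [himage]
  exact isPathConnected_diff_iUnion_filledHull (e.toHomeomorph.isOpenMap U hU)
    (e.lipschitz.isBounded_image hUb) (hUc.image e e.continuous.continuousOn)
    (fun i => (hK i).isCompact.image e.continuous)
    (fun _ _ hij => (disjoint_image_iff e.injective).2 (hdisj hij))
    (fun i => image_mono (hKU i))

end Transport

/-- Let `J₁` be a Jordan curve in `ℝ²` and let `K 0, …, K (m-1)` be pairwise disjoint Jordan
curves, disjoint from `J₁` and contained in `int J₁`. Then
`int J₁ \ ⋃ i, closure (int (K i))` is path-connected. -/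
theorem jordanInterior_diff_closures_pathConnected
    (J₁ : Set (EuclideanSpace ℝ (Fin 2))) (hJ₁ : IsJordanCurve J₁)
    (m : ℕ) (K : Fin m → Set (EuclideanSpace ℝ (Fin 2)))
    (hK : ∀ i, IsJordanCurve (K i))
    (hdisj : Pairwise (Function.onFun Disjoint K))
    (hdisjJ₁ : ∀ i, Disjoint (K i) J₁)
    (hsub : ∀ i, K i ⊆ jordanInterior J₁) :
    IsPathConnected (jordanInterior J₁ \ ⋃ i, closure (jordanInterior (K i))) :=
  jordanInterior_diff_closures_pathConnected_general hJ₁.isOpen_jordanInterior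
    hJ₁.isBounded_jordanInterior hJ₁.isConnected_jordanInterior hK hdisj hsub
end

section
/- Let f ∈ C_c^∞(ℝ²) with ‖∇f‖_{L¹(ℝ²;ℝ²)} = 1 and let ε > 0. Then there exist m ∈ ℕ and functions f_1, …, f_m ∈ W^{1,1}(ℝ²) such that: (a) for each i, the set {x ∈ ℝ² : ∇f_i(x) ≠ 0} has Lebesgue measure smaller than ε; (b) ∑_{i=1}^m ‖∇f_i‖_{L¹} ≤ 1; and (c) ‖∇f − ∑_{i=1}^m ∇f_i‖_{L¹} < ε. -/
open MeasureTheory Set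
open scoped RealInnerProductSpace

noncomputable section

/-- The divergence of a vector field `φ : ℝ² → ℝ²`. -/
def divergence (φ : EuclideanSpace ℝ (Fin 2) → EuclideanSpace ℝ (Fin 2))
    (x : EuclideanSpace ℝ (Fin 2)) : ℝ :=
  ∑ i : Fin 2, fderiv ℝ φ x (EuclideanSpace.single i 1) i

/-- `gf` is a weak (distributional) gradient of `f`, with both `f` and `gf` integrable:
`∫ f div φ = - ∫ gf ⬝ φ` for all test functions `φ ∈ C_c¹(ℝ²; ℝ²)`. -/
def IsWeakGradPair (f : EuclideanSpace ℝ (Fin 2) → ℝ)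
    (gf : EuclideanSpace ℝ (Fin 2) → EuclideanSpace ℝ (Fin 2)) : Prop :=
  Integrable f ∧ Integrable gf ∧
  ∀ φ : EuclideanSpace ℝ (Fin 2) → EuclideanSpace ℝ (Fin 2),
    ContDiff ℝ 1 φ → HasCompactSupport φ →
      ∫ x, f x * divergence φ x = - ∫ x, ⟪gf x, φ x⟫

/-!
Slice the range of `f` into finitely many intervals `(a, b]`. Truncating `f` to such an interval
gives a compactly supported Lipschitz function whose gradient is `∇f` on `{a < f ≤ b}` and zero
elsewhere, so the truncations decompose `∇f` exactly and without loss of norm. The thinness of the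
supports comes from the fact that `∇f = 0` almost everywhere on each level set: the distribution of
`f` under the measure restricted to `{∇f ≠ 0}` has no atoms, hence charges every interval of a fine
enough partition by less than `ε`.
-/

open Asymptotics Function InnerProductSpace
open scoped ENNReal NNReal Topology

section Partition

theorem sum_indicator_preimage_Ioc {X α M : Type*} [LinearOrder α] [AddCommMonoid M]
    {t : ℕ → α} (ht : Monotone t) (f : X → α) (g : X → M) (n : ℕ) :
    ∑ i : Fin n, (f ⁻¹' Ioc (t i) (t (i + 1))).indicator g =
      (f ⁻¹' Ioc (t 0) (t n)).indicator g := by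
  induction n with
  | zero => simp [Pi.zero_def]
  | succ n ih =>
    have hdisj : Disjoint (f ⁻¹' Ioc (t 0) (t n)) (f ⁻¹' Ioc (t n) (t (n + 1))) :=
      (Ioc_disjoint_Ioc_of_le le_rfl).preimage f
    simp only [Fin.sum_univ_castSucc, Fin.val_castSucc, Fin.val_last, ih]
    rw [← Ioc_union_Ioc_eq_Ioc (ht n.zero_le) (ht n.le_succ), preimage_union,
      indicator_union_of_disjoint hdisj]
    rfl

theorem exists_monotone_forall_measure_Ioc_lt (μ : Measure ℝ) [IsLocallyFiniteMeasure μ]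
    [NullSingletonClass μ] {a b : ℝ} (hab : a ≤ b) {ε : ℝ≥0∞} (hε : 0 < ε) :
    ∃ (n : ℕ) (t : ℕ → ℝ), Monotone t ∧ t 0 = a ∧ t n = b ∧
      ∀ i, μ (Ioc (t i) (t (i + 1))) < ε := by
  have hnhds (y : Icc a b) : ∃ U ⊇ {(y : ℝ)}, IsOpen U ∧ μ U < ε :=
    Set.exists_isOpen_lt_of_lt _ ε (by rwa [measure_singleton])
  choose U hyU hU hμU using hnhds
  obtain ⟨t, ht0, ht, ⟨n, htn⟩, hcover⟩ := exists_monotone_Icc_subset_open_cover_Icc hab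
    (fun y ↦ (hU y).preimage continuous_subtype_val) fun y _ ↦ mem_iUnion.2 ⟨y, hyU y rfl⟩
  refine ⟨n, fun i ↦ t i, fun i j hij ↦ ht hij, by simp [ht0], by simp [htn n le_rfl], fun i ↦ ?_⟩
  obtain ⟨y, hy⟩ := hcover i
  refine (measure_mono fun s hs ↦ ?_).trans_lt (hμU y)
  have hs' : s ∈ Icc a b := ⟨(t i).2.1.trans hs.1.le, hs.2.trans (t (i + 1)).2.2⟩
  exact @hy ⟨s, hs'⟩ ⟨hs.1.le, hs.2⟩

end Partition

section Layer

/-- The layer of height `b - a` cut out by the levels `a ≤ b`: the truncation of `y` to `[a, b]`,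
shifted so that `0` is fixed and composition with it preserves compact supports. -/
def layer (a b y : ℝ) : ℝ :=
  max a (min y b) - max a (min 0 b)

theorem layer_zero (a b : ℝ) : layer a b 0 = 0 :=
  sub_self _

theorem lipschitzWith_layer (a b : ℝ) : LipschitzWith 1 (layer a b) := by
  simpa [layer] using! ((LipschitzWith.id.min_const b).const_max a).sub (.const (max a (min 0 b)))

theorem hasDerivAt_layer {a b y : ℝ} (hab : a ≤ b) (ha : y ≠ a) (hb : y ≠ b) :
    HasDerivAt (layer a b) ((Ioc a b).indicator 1 y) y := by
  unfold layer
  refine HasDerivAt.sub_const _ ?_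
  rcases ha.lt_or_gt with hya | hay
  · rw [indicator_of_notMem fun h ↦ hya.not_gt h.1]
    refine (hasDerivAt_const y a).congr_of_eventuallyEq ?_
    filter_upwards [eventually_lt_nhds hya] with z hz
    exact max_eq_left ((min_le_left z b).trans hz.le)
  rcases hb.lt_or_gt with hyb | hby
  · rw [indicator_of_mem (mem_Ioc.2 ⟨hay, hyb.le⟩)]
    refine (hasDerivAt_id y).congr_of_eventuallyEq ?_
    filter_upwards [eventually_gt_nhds hay, eventually_lt_nhds hyb] with z hza hzb
    simp [hza.le, hzb.le]
  · rw [indicator_of_notMem fun h ↦ hby.not_ge h.2]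
    refine (hasDerivAt_const y b).congr_of_eventuallyEq ?_
    filter_upwards [eventually_gt_nhds hby] with z hz
    simp [hz.le, hab]

end Layer

section ZeroDerivative

theorem hasFDerivAt_zero_of_isBigO_sub {𝕜 E F G : Type*} [NontriviallyNormedField 𝕜]
    [NormedAddCommGroup E] [NormedSpace 𝕜 E] [NormedAddCommGroup F] [NormedSpace 𝕜 F]
    [NormedAddCommGroup G] [NormedSpace 𝕜 G] {f : E → F} {g : E → G} {x : E}
    (hgf : (fun y ↦ g y - g x) =O[𝓝 x] fun y ↦ f y - f x)
    (hf : HasFDerivAt f (0 : E →L[𝕜] F) x) : HasFDerivAt g (0 : E →L[𝕜] G) x := by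
  rw [hasFDerivAt_iff_isLittleO] at hf ⊢
  simp only [zero_apply, sub_zero] at hf ⊢
  exact hgf.trans_isLittleO hf

theorem ae_fderiv_eq_zero_of_apply_eq {E F : Type*} [NormedAddCommGroup E] [NormedSpace ℝ E]
    [FiniteDimensional ℝ E] [MeasurableSpace E] [BorelSpace E] [NormedAddCommGroup F]
    [NormedSpace ℝ F] {C : ℝ≥0} {f : E → F} (hf : LipschitzWith C f) (μ : Measure E)
    [μ.IsAddHaarMeasure] (c : F) : ∀ᵐ x ∂μ, f x = c → fderiv ℝ f x = 0 := by
  have hlip : LipschitzWith C fun x ↦ ‖f x - c‖ := by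
    simpa using! lipschitzWith_one_norm.comp (hf.sub (.const c))
  filter_upwards [hlip.ae_differentiableAt (μ := μ)] with x hdiff hxc
  -- The nonnegative function `‖f - c‖` vanishes at `x`, so its derivative there can only be `0`.
  have hmin : IsLocalMin (fun y ↦ ‖f y - c‖) x := .of_forall fun y ↦ by simp [hxc]
  have hnorm : HasFDerivAt (fun y ↦ ‖f y - c‖) (0 : E →L[ℝ] ℝ) x :=
    hmin.fderiv_eq_zero ▸ hdiff.hasFDerivAt
  refine (hasFDerivAt_zero_of_isBigO_sub (isBigO_of_le _ fun y ↦ ?_) hnorm).fderiv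
  simp [hxc]

end ZeroDerivative

section Gradient

variable {E : Type*} [NormedAddCommGroup E] [InnerProductSpace ℝ E] [CompleteSpace E]

theorem gradient_eq_zero_iff {f : E → ℝ} {x : E} : gradient f x = 0 ↔ fderiv ℝ f x = 0 :=
  (toDual ℝ E).symm.map_eq_zero_iff

theorem support_gradient_subset_tsupport (f : E → ℝ) : support (gradient f) ⊆ tsupport f :=
  fun _ hx ↦ support_fderiv_subset ℝ (mt gradient_eq_zero_iff.2 hx)

theorem measurable_gradient [MeasurableSpace E] [BorelSpace E] (f : E → ℝ) :
    Measurable (gradient f) :=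
  (toDual ℝ E).symm.continuous.measurable.comp (measurable_fderiv ℝ f)

end Gradient

section LipschitzGradient

variable {E : Type*} [NormedAddCommGroup E] [InnerProductSpace ℝ E] [FiniteDimensional ℝ E]
  [MeasurableSpace E] [BorelSpace E]

theorem integrable_gradient {C : ℝ≥0} {f : E → ℝ} (hf : LipschitzWith C f)
    (hsupp : HasCompactSupport f) (μ : Measure E) [IsFiniteMeasureOnCompacts μ] :
    Integrable (gradient f) μ := by
  rw [← integrableOn_iff_integrable_of_support_subset (support_gradient_subset_tsupport f)]
  refine Measure.integrableOn_of_bounded hsupp.isCompact.measure_ne_top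
    (measurable_gradient f).aestronglyMeasurable (M := C) (.of_forall fun x ↦ ?_)
  simpa [gradient] using norm_fderiv_le_of_lipschitz ℝ hf

theorem ae_hasGradientAt_layer_comp {C : ℝ≥0} {f : E → ℝ} (hf : LipschitzWith C f)
    (μ : Measure E) [μ.IsAddHaarMeasure] {a b : ℝ} (hab : a ≤ b) :
    ∀ᵐ x ∂μ, HasGradientAt (layer a b ∘ f) ((f ⁻¹' Ioc a b).indicator (gradient f) x) x := by
  filter_upwards [hf.ae_differentiableAt (μ := μ), ae_fderiv_eq_zero_of_apply_eq hf μ a,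
    ae_fderiv_eq_zero_of_apply_eq hf μ b] with x hdiff ha hb
  rw [hasGradientAt_iff_hasFDerivAt]
  by_cases hcrit : fderiv ℝ f x = 0
  · have hzero : HasFDerivAt (layer a b ∘ f) (0 : E →L[ℝ] ℝ) x :=
      hasFDerivAt_zero_of_isBigO_sub
        (isBigO_of_le _ fun y ↦ by
          simpa using (lipschitzWith_layer a b).norm_sub_le (f y) (f x))
        (hcrit ▸ hdiff.hasFDerivAt)
    simpa [indicator, gradient_eq_zero_iff.2 hcrit] using hzero
  · have hchain := (hasDerivAt_layer hab (mt ha hcrit) (mt hb hcrit)).comp_hasFDerivAt x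
      hdiff.hasFDerivAt
    convert! hchain using 1
    by_cases hx : f x ∈ Ioc a b <;> simp [indicator, hx, toDual_gradient]

end LipschitzGradient

section WeakGradient

/-- `g` is a weak gradient of `f` with respect to `μ`, and both are integrable: the generalization
of `IsWeakGradPair` to finite-dimensional inner product spaces, where the divergence of a field is
the trace of its derivative. (In infinite dimension `LinearMap.trace` is `0`.) -/
def HasIntegrableWeakGradient {E : Type*} [NormedAddCommGroup E] [InnerProductSpace ℝ E]
    [MeasurableSpace E] (μ : Measure E) (f : E → ℝ) (g : E → E) : Prop :=
  Integrable f μ ∧ Integrable g μ ∧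
    ∀ φ : E → E, ContDiff ℝ 1 φ → HasCompactSupport φ →
      ∫ x, f x * LinearMap.trace ℝ E (fderiv ℝ φ x) ∂μ = -∫ x, ⟪g x, φ x⟫ ∂μ

theorem divergence_eq_trace (φ : EuclideanSpace ℝ (Fin 2) → EuclideanSpace ℝ (Fin 2))
    (x : EuclideanSpace ℝ (Fin 2)) :
    divergence φ x = LinearMap.trace ℝ (EuclideanSpace ℝ (Fin 2)) (fderiv ℝ φ x) := by
  simp [divergence, LinearMap.trace_eq_sum_inner _ (EuclideanSpace.basisFun (Fin 2) ℝ),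
    EuclideanSpace.inner_single_left]

theorem isWeakGradPair_iff {f : EuclideanSpace ℝ (Fin 2) → ℝ}
    {g : EuclideanSpace ℝ (Fin 2) → EuclideanSpace ℝ (Fin 2)} :
    IsWeakGradPair f g ↔ HasIntegrableWeakGradient volume f g := by
  simp only [IsWeakGradPair, HasIntegrableWeakGradient, divergence_eq_trace]

variable {E : Type*} [NormedAddCommGroup E] [InnerProductSpace ℝ E] [FiniteDimensional ℝ E]
  [MeasurableSpace E] [BorelSpace E] {C : ℝ≥0} {f : E → ℝ} {μ : Measure E} [μ.IsAddHaarMeasure]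

theorem integral_mul_fderiv_eq_neg_integral_inner_mul (hf : LipschitzWith C f) {g : E → E}
    (hg : ∀ᵐ x ∂μ, HasGradientAt f (g x) x) {ψ : E → ℝ} (hψ : ContDiff ℝ 1 ψ)
    (hψsupp : HasCompactSupport ψ) (v : E) :
    ∫ x, f x * fderiv ℝ ψ x v ∂μ = -∫ x, ⟪g x, v⟫ * ψ x ∂μ := by
  obtain ⟨D, hD⟩ := hψ.lipschitzWith_of_hasCompactSupport hψsupp one_ne_zero
  have hline : ∀ᵐ x ∂μ, lineDeriv ℝ f x v * ψ x = ⟪g x, v⟫ * ψ x := by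
    filter_upwards [hg] with x hx
    rw [hx.differentiableAt.lineDeriv_eq_fderiv, hx.fderiv_apply]
  rw [← integral_congr_ae hline, hf.integral_lineDeriv_mul_eq hD hψsupp, ← integral_neg]
  refine integral_congr_ae (.of_forall fun x ↦ ?_)
  simp [(hψ.differentiable one_ne_zero x).lineDeriv_eq_fderiv, mul_comm]

theorem hasIntegrableWeakGradient_of_lipschitzWith (hf : LipschitzWith C f)
    (hsupp : HasCompactSupport f) {g : E → E} (hg : ∀ᵐ x ∂μ, HasGradientAt f (g x) x) :
    HasIntegrableWeakGradient μ f g := by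
  have hgint : Integrable g μ :=
    (integrable_gradient hf hsupp μ).congr (hg.mono fun _ hx ↦ hx.gradient)
  refine ⟨hf.continuous.integrable_of_hasCompactSupport hsupp, hgint, fun φ hφ hφsupp ↦ ?_⟩
  let b := stdOrthonormalBasis ℝ E
  have hcoord (i) : ContDiff ℝ 1 fun x ↦ ⟪b i, φ x⟫ := contDiff_const.inner ℝ hφ
  have hcoord_supp (i) : HasCompactSupport fun x ↦ ⟪b i, φ x⟫ :=
    hφsupp.comp_left (inner_zero_right (b i))
  have hcoord_fderiv (i x) : fderiv ℝ (fun x ↦ ⟪b i, φ x⟫) x (b i) = ⟪b i, fderiv ℝ φ x (b i)⟫ := by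
    simp [fderiv_inner_apply ℝ (differentiableAt_const (b i)) (hφ.differentiable one_ne_zero x)]
  have hint_fderiv (i) : Integrable (fun x ↦ f x * fderiv ℝ (fun x ↦ ⟪b i, φ x⟫) x (b i)) μ :=
    (hf.continuous.mul (((hcoord i).continuous_fderiv one_ne_zero).clm_apply
      continuous_const)).integrable_of_hasCompactSupport hsupp.mul_right
  have hint_inner (i) : Integrable (fun x ↦ ⟪g x, b i⟫ * ⟪b i, φ x⟫) μ := by
    obtain ⟨B, hB⟩ := (hcoord_supp i).exists_bound_of_continuous (hcoord i).continuous
    exact (hgint.inner_const (b i)).mul_bdd (hcoord i).continuous.aestronglyMeasurable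
      (.of_forall hB)
  calc
    ∫ x, f x * LinearMap.trace ℝ E (fderiv ℝ φ x) ∂μ
        = ∑ i, ∫ x, f x * fderiv ℝ (fun x ↦ ⟪b i, φ x⟫) x (b i) ∂μ := by
      rw [← integral_finsetSum _ fun i _ ↦ hint_fderiv i]
      simp only [← Finset.mul_sum, hcoord_fderiv, LinearMap.trace_eq_sum_inner _ b,
        ContinuousLinearMap.coe_coe]
    _ = ∑ i, -∫ x, ⟪g x, b i⟫ * ⟪b i, φ x⟫ ∂μ := Finset.sum_congr rfl fun i _ ↦
      integral_mul_fderiv_eq_neg_integral_inner_mul hf hg (hcoord i) (hcoord_supp i) (b i)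
    _ = -∫ x, ⟪g x, φ x⟫ ∂μ := by
      simp only [Finset.sum_neg_distrib, ← integral_finsetSum _ fun i _ ↦ hint_inner i,
        b.sum_inner_mul_inner]

theorem hasIntegrableWeakGradient_layer_comp (hf : LipschitzWith C f)
    (hsupp : HasCompactSupport f) {a b : ℝ} (hab : a ≤ b) :
    HasIntegrableWeakGradient μ (layer a b ∘ f) ((f ⁻¹' Ioc a b).indicator (gradient f)) :=
  hasIntegrableWeakGradient_of_lipschitzWith ((lipschitzWith_layer a b).comp hf)
    (hsupp.comp_left (layer_zero a b)) (ae_hasGradientAt_layer_comp hf μ hab)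

end WeakGradient

section Decomposition

variable {E : Type*} [NormedAddCommGroup E] [InnerProductSpace ℝ E] [FiniteDimensional ℝ E]
  [MeasurableSpace E] [BorelSpace E] {C : ℝ≥0} {f : E → ℝ}

theorem nullSingletonClass_map_restrict_support_gradient (hf : LipschitzWith C f) (μ : Measure E)
    [μ.IsAddHaarMeasure] : NullSingletonClass ((μ.restrict (support (gradient f))).map f) where
  measure_singleton c := by
    have hmeas := hf.continuous.measurable
    rw [Measure.map_apply hmeas (measurableSet_singleton c),
      Measure.restrict_apply (hmeas (measurableSet_singleton c))]
    refine measure_mono_null ?_ (ae_iff.1 (ae_fderiv_eq_zero_of_apply_eq hf μ c))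
    exact fun x ⟨hxc, hx⟩ h ↦ hx (gradient_eq_zero_iff.2 (h hxc))

theorem exists_monotone_forall_measure_support_indicator_gradient_lt (hf : LipschitzWith C f)
    (hsupp : HasCompactSupport f) (μ : Measure E) [μ.IsAddHaarMeasure] {ε : ℝ≥0∞} (hε : 0 < ε) :
    ∃ (n : ℕ) (t : ℕ → ℝ), Monotone t ∧ f ⁻¹' Ioc (t 0) (t n) = univ ∧
      ∀ i, μ (support ((f ⁻¹' Ioc (t i) (t (i + 1))).indicator (gradient f))) < ε := by
  obtain ⟨B, hB⟩ := hsupp.exists_bound_of_continuous hf.continuous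
  have hB0 : 0 ≤ B := (norm_nonneg _).trans (hB 0)
  have hfin : IsFiniteMeasure (μ.restrict (support (gradient f))) :=
    isFiniteMeasure_restrict.2 (measure_ne_top_of_subset (support_gradient_subset_tsupport f)
      hsupp.isCompact.measure_ne_top)
  have hatoms := nullSingletonClass_map_restrict_support_gradient hf μ
  obtain ⟨n, t, ht, ht0, htn, hlt⟩ := exists_monotone_forall_measure_Ioc_lt
    ((μ.restrict (support (gradient f))).map f) (show -B - 1 ≤ B by linarith) hε
  refine ⟨n, t, ht, eq_univ_of_forall fun x ↦ ?_, fun i ↦ ?_⟩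
  · have hx := abs_le.1 (hB x)
    rw [mem_preimage, ht0, htn]
    exact ⟨by linarith, hx.2⟩
  · have hmeas := hf.continuous.measurable
    rw [support_indicator, ← Measure.restrict_apply (hmeas measurableSet_Ioc),
      ← Measure.map_apply hmeas measurableSet_Ioc]
    exact hlt i

theorem gradient_approx_by_small_support_sobolev_general (hf : LipschitzWith C f)
    (hsupp : HasCompactSupport f) (μ : Measure E) [μ.IsAddHaarMeasure] {ε : ℝ≥0∞} (hε : 0 < ε) :
    ∃ (m : ℕ) (F : Fin m → E → ℝ) (G : Fin m → E → E),
      (∀ i, HasIntegrableWeakGradient μ (F i) (G i)) ∧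
      (∀ i, μ (support (G i)) < ε) ∧
      ∑ i, ∫ x, ‖G i x‖ ∂μ = ∫ x, ‖gradient f x‖ ∂μ ∧
      ∑ i, G i = gradient f := by
  obtain ⟨m, t, ht, hrange, hsmall⟩ :=
    exists_monotone_forall_measure_support_indicator_gradient_lt hf hsupp μ hε
  have hweak (i : ℕ) := hasIntegrableWeakGradient_layer_comp (μ := μ) hf hsupp (ht i.le_succ)
  refine ⟨m, fun i ↦ layer (t i) (t (i + 1)) ∘ f,
    fun i ↦ (f ⁻¹' Ioc (t i) (t (i + 1))).indicator (gradient f),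
    fun i ↦ hweak i, fun i ↦ hsmall i, ?_, ?_⟩
  · have hnorm := sum_indicator_preimage_Ioc ht f (fun x ↦ ‖gradient f x‖) m
    rw [hrange, indicator_univ] at hnorm
    rw [← integral_finsetSum _ fun (i : Fin m) _ ↦ (hweak i).2.1.norm]
    refine integral_congr_ae (.of_forall fun x ↦ ?_)
    simpa only [norm_indicator_eq_indicator_norm, Finset.sum_apply] using congr_fun hnorm x
  · rw [sum_indicator_preimage_Ioc ht, hrange, indicator_univ]

end Decomposition

/-- Let `f ∈ C_c^∞(ℝ²)` with `‖∇f‖_{L¹} = 1` and `ε > 0`. Then there are finitely many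
functions `F 0, …, F (m-1) ∈ W^{1,1}(ℝ²)`, with weak gradients `G 0, …, G (m-1)`, such that
each `G i` is nonzero only on a set of measure `< ε`, `∑ i ‖G i‖_{L¹} ≤ 1`, and
`‖∇f - ∑ i G i‖_{L¹} < ε`. -/
theorem gradient_approx_by_small_support_sobolev
    (f : EuclideanSpace ℝ (Fin 2) → ℝ) (hf : ContDiff ℝ (⊤ : ℕ∞) f)
    (hsupp : HasCompactSupport f)
    (hnorm : ∫ x, ‖gradient f x‖ = 1) (ε : ℝ) (hε : 0 < ε) :
    ∃ (m : ℕ) (F : Fin m → EuclideanSpace ℝ (Fin 2) → ℝ)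
      (G : Fin m → EuclideanSpace ℝ (Fin 2) → EuclideanSpace ℝ (Fin 2)),
      (∀ i, IsWeakGradPair (F i) (G i)) ∧
      (∀ i, volume {x | G i x ≠ 0} < ENNReal.ofReal ε) ∧
      (∑ i, ∫ x, ‖G i x‖) ≤ 1 ∧
      (∫ x, ‖gradient f x - ∑ i, G i x‖) < ε := by
  obtain ⟨C, hlip⟩ := hf.lipschitzWith_of_hasCompactSupport hsupp (by simp)
  obtain ⟨m, F, G, hweak, hsmall, hsum, hG⟩ := gradient_approx_by_small_support_sobolev_general
    hlip hsupp volume (ENNReal.ofReal_pos.2 hε)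
  exact ⟨m, F, G, fun i ↦ isWeakGradPair_iff.2 (hweak i), hsmall, (hsum.trans hnorm).le,
    by simpa [← hG] using hε⟩

end
end
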